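/- Let $h : [0,\infty) \to [0,\infty)$ be measurable with $c := \int_0^\infty h(w^2) w^{n_1 + n_2 - 1}\, dw \in (0,\infty)$, and let $(X_1, X_2)$ be a random vector in $\mathbb{R}^{n_1+n_2} = \mathbb{R}^{n_1}\times\mathbb{R}^{n_2}$ with density proportional to $h(\|x_1\|^2 + \|x_2\|^2)$. Then the distribution of $F = \|X_1\|^2 / \|X_2\|^2$ has density $\frac{\Gamma((n_1+n_2)/2)}{\Gamma(n_1/2)\Gamma(n_2/2)} f^{n_1/2-1}(1+f)^{-(n_1+n_2)/2}$ on $(0,\infty)$, independent of the generator $h$. -/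

import Mathlib

open MeasureTheory Real

/-!
Under a Haar measure on an `n`-dimensional normed space, `‖x‖ ^ p` is distributed, up to a constant,
as `t ^ (n / p - 1) dt`. The substitution `(u, v) ↦ (u / v, u + v)` carries the product of
`u ^ (a - 1) du` and `v ^ (b - 1) dv` to the product of a multiple of the beta prime distribution
and `w ^ (a + b - 1) dw`. A density depending only on `u + v` reweights the second factor alone, so
it affects the law of `u / v` only through the total mass.
-/

section

open Set Module ProbabilityTheory
open scoped ENNReal

section Independence

variable {Ω α β : Type*} [MeasurableSpace Ω] [MeasurableSpace α] [MeasurableSpace β]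
  {μ : Measure Ω}

theorem map_withDensity_comp {T : Ω → α} {g : α → ℝ≥0∞} (hT : Measurable T) (hg : Measurable g) :
    (μ.withDensity (g ∘ T)).map T = (μ.map T).withDensity g := by
  ext s hs
  rw [Measure.map_apply hT hs, withDensity_apply _ (hT hs), withDensity_apply _ hs,
    setLIntegral_map hs hg hT, Function.comp_def]

theorem map_withDensity_comp_of_map_prodMk_eq_prod {X : Ω → α} {Y : Ω → β} {κ : Measure α}
    [IsProbabilityMeasure κ] {ρ : Measure β} [SFinite ρ] {g : β → ℝ≥0∞} (hX : Measurable X)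
    (hY : Measurable Y) (hg : Measurable g) (hXY : μ.map (fun ω => (X ω, Y ω)) = κ.prod ρ) :
    (μ.withDensity (g ∘ Y)).map X = μ.withDensity (g ∘ Y) univ • κ := by
  have hmap : (μ.withDensity (g ∘ Y)).map X = ρ.withDensity g univ • κ := calc
    _ = ((μ.withDensity ((g ∘ Prod.snd) ∘ fun ω => (X ω, Y ω))).map
          (fun ω => (X ω, Y ω))).map Prod.fst := by
      rw [Measure.map_map measurable_fst (by fun_prop)]
      rfl
    _ = (κ.prod (ρ.withDensity g)).map Prod.fst := by
      rw [map_withDensity_comp (by fun_prop) (by fun_prop), hXY, prod_withDensity_right hg]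
      rfl
    _ = _ := Measure.map_fst_prod
  have hmass : μ.withDensity (g ∘ Y) univ = ρ.withDensity g univ := by
    simpa [Measure.map_apply hX] using congrArg (· univ) hmap
  rw [hmap, hmass]

end Independence

/-- The measure `t ^ (s - 1) dt` on the positive half-line, extended by zero to `ℝ`: the
radial part of a Haar measure, with a real exponent so that it covers powers of the norm. -/
noncomputable def powMeasure (s : ℝ) : Measure ℝ :=
  (volume.restrict (Ioi 0)).withDensity fun t => ENNReal.ofReal (t ^ (s - 1))

instance (s : ℝ) : SFinite (powMeasure s) := by
  unfold powMeasure; infer_instance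

theorem lintegral_powMeasure (s : ℝ) {f : ℝ → ℝ≥0∞} (hf : Measurable f) :
    ∫⁻ t, f t ∂powMeasure s = ∫⁻ t in Ioi 0, ENNReal.ofReal (t ^ (s - 1)) * f t :=
  lintegral_withDensity_eq_lintegral_mul _ (by fun_prop) hf

theorem ae_pos_powMeasure (s : ℝ) : ∀ᵐ t ∂powMeasure s, 0 < t :=
  (withDensity_absolutelyContinuous _ _).ae_le (ae_restrict_mem measurableSet_Ioi)

theorem withDensity_rpow_powMeasure (s r : ℝ) :
    (powMeasure s).withDensity (fun t => ENNReal.ofReal (t ^ r)) = powMeasure (s + r) := by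
  unfold powMeasure
  rw [← withDensity_mul _ (by fun_prop) (by fun_prop)]
  refine withDensity_congr_ae ?_
  filter_upwards [ae_restrict_mem measurableSet_Ioi] with t (ht : 0 < t)
  rw [Pi.mul_apply, ← ENNReal.ofReal_mul (by positivity), ← rpow_add ht]
  ring_nf

theorem map_powMeasure {s r k : ℝ} {φ φ' : ℝ → ℝ} (hφ : Measurable φ)
    (hderiv : ∀ t ∈ Ioi 0, HasDerivWithinAt φ (φ' t) (Ioi 0) t) (hbij : BijOn φ (Ioi 0) (Ioi 0))
    (hk : 0 ≤ k) (hweight : ∀ t ∈ Ioi 0, t ^ (s - 1) = k * (|φ' t| * φ t ^ (r - 1))) :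
    (powMeasure s).map φ = ENNReal.ofReal k • powMeasure r := by
  refine Measure.ext_of_lintegral _ fun f hf => ?_
  calc
    ∫⁻ x, f x ∂(powMeasure s).map φ
        = ∫⁻ t in Ioi 0, ENNReal.ofReal (t ^ (s - 1)) * f (φ t) := by
      rw [lintegral_map hf hφ, lintegral_powMeasure _ (by fun_prop)]
    _ = ∫⁻ t in Ioi 0, ENNReal.ofReal k *
          (ENNReal.ofReal |φ' t| * (ENNReal.ofReal (φ t ^ (r - 1)) * f (φ t))) := by
      refine setLIntegral_congr_fun measurableSet_Ioi fun t ht => ?_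
      simp only [hweight t ht, ENNReal.ofReal_mul hk, ENNReal.ofReal_mul (abs_nonneg (φ' t)),
        mul_assoc]
    _ = ENNReal.ofReal k * ∫⁻ x in φ '' Ioi 0, ENNReal.ofReal (x ^ (r - 1)) * f x := by
      rw [lintegral_const_mul' _ _ ENNReal.ofReal_ne_top,
        lintegral_image_eq_lintegral_abs_deriv_mul measurableSet_Ioi hderiv hbij.injOn]
    _ = ∫⁻ x, f x ∂ENNReal.ofReal k • powMeasure r := by
      rw [hbij.image_eq, lintegral_smul_measure, lintegral_powMeasure _ hf, smul_eq_mul]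

theorem map_rpow_powMeasure (s : ℝ) {p : ℝ} (hp : p ≠ 0) :
    (powMeasure s).map (· ^ p) = ENNReal.ofReal |p|⁻¹ • powMeasure (s / p) := by
  refine map_powMeasure (φ' := fun t => p * t ^ (p - 1)) (by fun_prop) ?_ ⟨?_, ?_, ?_⟩
    (by positivity) ?_
  · exact fun t (ht : 0 < t) => (hasDerivAt_rpow_const (.inl ht.ne')).hasDerivWithinAt
  · exact fun t ht => rpow_pos_of_pos ht p
  · exact (rpow_left_injOn hp).mono Ioi_subset_Ici_self
  · exact fun t ht => ⟨t ^ p⁻¹, rpow_pos_of_pos ht _, rpow_inv_rpow (le_of_lt ht) hp⟩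
  · intro t (ht : 0 < t)
    rw [abs_mul, abs_of_pos (rpow_pos_of_pos ht _), ← rpow_mul ht.le, mul_assoc, ← rpow_add ht,
      inv_mul_cancel_left₀ (abs_ne_zero.2 hp)]
    congr 1
    field_simp
    ring

theorem map_mul_left_powMeasure (s : ℝ) {c : ℝ} (hc : 0 < c) :
    (powMeasure s).map (c * ·) = ENNReal.ofReal (c ^ (-s)) • powMeasure s := by
  refine map_powMeasure (φ' := fun _ => c) (by fun_prop) ?_ ⟨?_, ?_, ?_⟩ (by positivity) ?_
  · exact fun t _ => (hasDerivAt_const_mul c).hasDerivWithinAt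
  · exact fun t ht => mul_pos hc ht
  · exact (mul_right_injective₀ hc.ne').injOn
  · exact fun t ht => ⟨t / c, div_pos ht hc, mul_div_cancel₀ t hc.ne'⟩
  · intro t (ht : 0 < t)
    rw [abs_of_pos hc, mul_rpow hc.le ht.le, rpow_neg hc.le, rpow_sub_one hc.ne']
    field_simp

theorem lintegral_exp_neg_powMeasure {s : ℝ} (hs : 0 < s) :
    ∫⁻ t, ENNReal.ofReal (exp (-t)) ∂powMeasure s = ENNReal.ofReal (Gamma s) := by
  rw [Gamma_eq_integral hs, ofReal_integral_eq_lintegral_ofReal (GammaIntegral_convergent hs),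
    lintegral_powMeasure _ (by fun_prop)]
  · refine setLIntegral_congr_fun measurableSet_Ioi fun t _ => ?_
    rw [ENNReal.ofReal_mul (exp_nonneg _), mul_comm]
  · filter_upwards [ae_restrict_mem measurableSet_Ioi] with t (ht : 0 < t)
    exact mul_nonneg (exp_nonneg _) (rpow_nonneg ht.le _)

/-- The beta prime (beta type II) distribution with shape parameters `a` and `b`, given by its
density with respect to Lebesgue measure. The parameters are meant to be positive. -/
noncomputable def betaPrimeMeasure (a b : ℝ) : Measure ℝ :=
  volume.withDensity fun x => ENNReal.ofReal <|
    (Ioi 0).indicator (fun x => (beta a b)⁻¹ * (x ^ (a - 1) * (1 + x) ^ (-(a + b)))) x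

theorem ofReal_beta_smul_betaPrimeMeasure {a b : ℝ} (ha : 0 < a) (hb : 0 < b) :
    ENNReal.ofReal (beta a b) • betaPrimeMeasure a b =
      (powMeasure a).withDensity fun x => ENNReal.ofReal ((1 + x) ^ (-(a + b))) := by
  have hB := beta_pos ha hb
  have hmeas : Measurable fun x : ℝ => (beta a b)⁻¹ * (x ^ (a - 1) * (1 + x) ^ (-(a + b))) := by
    fun_prop
  unfold betaPrimeMeasure powMeasure
  rw [← withDensity_smul _ (hmeas.indicator measurableSet_Ioi).ennreal_ofReal,
    ← withDensity_mul _ (by fun_prop) (by fun_prop), ← withDensity_indicator measurableSet_Ioi]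
  congr 1 with x
  by_cases hx : x ∈ Ioi 0
  · have hx' : 0 < x := hx
    simp only [Pi.smul_apply, Pi.mul_apply, smul_eq_mul, indicator_of_mem hx]
    rw [← ENNReal.ofReal_mul hB.le, ← ENNReal.ofReal_mul (by positivity),
      mul_inv_cancel_left₀ hB.ne']
  · simp [indicator_of_notMem hx]

theorem map_div_add_powMeasure_prod {a b : ℝ} (ha : 0 < a) (hb : 0 < b) :
    ((powMeasure a).prod (powMeasure b)).map (fun q => (q.1 / q.2, q.1 + q.2)) =
      ENNReal.ofReal (beta a b) • (betaPrimeMeasure a b).prod (powMeasure (a + b)) := by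
  rw [← Measure.prod_smul_left, ofReal_beta_smul_betaPrimeMeasure ha hb]
  refine Measure.ext_of_lintegral _ fun G hG => ?_
  calc
    _ = ∫⁻ v, ∫⁻ u, G (u / v, u + v) ∂powMeasure a ∂powMeasure b := by
      rw [lintegral_map hG (by fun_prop), lintegral_prod_symm _ (by fun_prop)]
    _ = ∫⁻ v, ENNReal.ofReal (v ^ a) * ∫⁻ x, G (x, (1 + x) * v) ∂powMeasure a ∂powMeasure b := by
      refine lintegral_congr_ae ?_
      filter_upwards [ae_pos_powMeasure b] with v hv
      have hscale : v⁻¹ ^ (-a) = v ^ a := by rw [inv_rpow hv.le, rpow_neg hv.le, inv_inv]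
      rw [← smul_eq_mul, ← lintegral_smul_measure, ← hscale,
        ← map_mul_left_powMeasure _ (inv_pos.2 hv), lintegral_map (by fun_prop) (by fun_prop)]
      refine lintegral_congr fun u => ?_
      congr 2 <;> field_simp
      ring
    _ = ∫⁻ v, ∫⁻ x, G (x, (1 + x) * v) ∂powMeasure a ∂powMeasure (a + b) := by
      rw [add_comm a b, ← withDensity_rpow_powMeasure,
        lintegral_withDensity_eq_lintegral_mul _ (by fun_prop)]
      · rfl
      · exact Measurable.lintegral_prod_right' (f := fun q : ℝ × ℝ => G (q.2, (1 + q.2) * q.1))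
          (by fun_prop)
    _ = ∫⁻ x, ∫⁻ v, G (x, (1 + x) * v) ∂powMeasure (a + b) ∂powMeasure a :=
      lintegral_lintegral_swap (by fun_prop)
    _ = ∫⁻ x, ENNReal.ofReal ((1 + x) ^ (-(a + b))) * ∫⁻ w, G (x, w) ∂powMeasure (a + b)
          ∂powMeasure a := by
      refine lintegral_congr_ae ?_
      filter_upwards [ae_pos_powMeasure a] with x hx
      rw [← smul_eq_mul, ← lintegral_smul_measure, ← map_mul_left_powMeasure _ (by positivity),
        lintegral_map (by fun_prop) (by fun_prop)]
    _ = _ := by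
      rw [lintegral_prod _ (by fun_prop), lintegral_withDensity_eq_lintegral_mul _ (by fun_prop)]
      · rfl
      · exact hG.lintegral_prod_right'

theorem isProbabilityMeasure_betaPrimeMeasure {a b : ℝ} (ha : 0 < a) (hb : 0 < b) :
    IsProbabilityMeasure (betaPrimeMeasure a b) := by
  have hΓ : 0 < Gamma (a + b) := Gamma_pos_of_pos (by positivity)
  -- Both sides of `map_div_add_powMeasure_prod` are tested against `exp (-(u + v))`.
  have hmass : ENNReal.ofReal (Gamma a * Gamma b) * betaPrimeMeasure a b univ =
      ENNReal.ofReal (Gamma a * Gamma b) := calc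
    _ = ENNReal.ofReal (beta a b) *
          (betaPrimeMeasure a b univ * ENNReal.ofReal (Gamma (a + b))) := by
      have hB : Gamma a * Gamma b = beta a b * Gamma (a + b) := by
        rw [beta, div_mul_cancel₀ _ hΓ.ne']
      rw [hB, ENNReal.ofReal_mul (beta_pos ha hb).le]
      ring
    _ = ∫⁻ q, ENNReal.ofReal (exp (-q.2)) ∂ENNReal.ofReal (beta a b) •
          (betaPrimeMeasure a b).prod (powMeasure (a + b)) := by
      rw [lintegral_smul_measure, ← lintegral_exp_neg_powMeasure (by positivity), smul_eq_mul,
        ← lintegral_one, ← lintegral_prod_mul (by fun_prop) (by fun_prop)]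
      simp only [one_mul]
    _ = ∫⁻ q, ENNReal.ofReal (exp (-q.1)) * ENNReal.ofReal (exp (-q.2))
          ∂(powMeasure a).prod (powMeasure b) := by
      rw [← map_div_add_powMeasure_prod ha hb, lintegral_map (by fun_prop) (by fun_prop)]
      simp only [neg_add, exp_add, ENNReal.ofReal_mul (exp_nonneg _)]
    _ = ENNReal.ofReal (Gamma a * Gamma b) := by
      rw [lintegral_prod_mul (f := fun u => ENNReal.ofReal (exp (-u)))
        (g := fun v => ENNReal.ofReal (exp (-v))) (by fun_prop) (by fun_prop),
        lintegral_exp_neg_powMeasure ha, lintegral_exp_neg_powMeasure hb,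
        ENNReal.ofReal_mul (Gamma_pos_of_pos ha).le]
  refine ⟨?_⟩
  have hΓab : 0 < Gamma a * Gamma b := mul_pos (Gamma_pos_of_pos ha) (Gamma_pos_of_pos hb)
  exact (ENNReal.mul_eq_left (ENNReal.ofReal_pos.2 hΓab).ne' ENNReal.ofReal_ne_top).1 hmass

section Norm

variable {E F : Type*} [NormedAddCommGroup E] [NormedSpace ℝ E] [FiniteDimensional ℝ E]
  [Nontrivial E] [MeasurableSpace E] [BorelSpace E]
  [NormedAddCommGroup F] [NormedSpace ℝ F] [FiniteDimensional ℝ F]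
  [Nontrivial F] [MeasurableSpace F] [BorelSpace F]

theorem map_norm_addHaar (μ : Measure E) [μ.IsAddHaarMeasure] :
    μ.map norm = μ.toSphere univ • powMeasure (finrank ℝ E) := by
  refine Measure.ext_of_lintegral _ fun f hf => ?_
  rw [lintegral_map hf measurable_norm, lintegral_smul_measure, smul_eq_mul]
  calc
    ∫⁻ x, f ‖x‖ ∂μ = ∫⁻ x : ({0}ᶜ : Set E), f ‖x.1‖ ∂μ.comap (↑) := by
      rw [lintegral_subtype_comap (measurableSet_singleton _).compl fun x => f ‖x‖,
        restrict_compl_singleton]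
    _ = ∫⁻ x, f x.2 ∂μ.toSphere.prod (.volumeIoiPow (finrank ℝ E - 1)) := by
      simpa using μ.measurePreserving_homeomorphUnitSphereProd.lintegral_comp_emb
        (Homeomorph.measurableEmbedding _) fun x => f x.2
    _ = μ.toSphere univ * ∫⁻ r : Ioi (0 : ℝ), f r ∂.volumeIoiPow (finrank ℝ E - 1) := by
      simpa using lintegral_prod_mul (μ := μ.toSphere) (f := fun _ => 1)
        (ν := .volumeIoiPow (finrank ℝ E - 1)) (g := fun r => f r)
        aemeasurable_const (by fun_prop)
    _ = μ.toSphere univ * ∫⁻ r, f r ∂powMeasure (finrank ℝ E) := by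
      rw [Measure.volumeIoiPow, lintegral_withDensity_eq_lintegral_mul _ (by fun_prop)
        (by fun_prop), lintegral_powMeasure _ hf, ← Nat.cast_pred finrank_pos]
      simp only [rpow_natCast]
      exact congrArg _ (lintegral_subtype_comap measurableSet_Ioi
        fun r : ℝ => ENNReal.ofReal (r ^ (finrank ℝ E - 1)) * f r)

theorem map_norm_rpow_addHaar (μ : Measure E) [μ.IsAddHaarMeasure] {p : ℝ} (hp : p ≠ 0) :
    μ.map (fun x => ‖x‖ ^ p) =
      (μ.toSphere univ * ENNReal.ofReal |p|⁻¹) • powMeasure (finrank ℝ E / p) := by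
  rw [← smul_smul, ← map_rpow_powMeasure _ hp, ← Measure.map_smul, ← map_norm_addHaar,
    Measure.map_map (by fun_prop) measurable_norm, Function.comp_def]

theorem exists_map_norm_rpow_div_add_eq_prod (μ : Measure E) [μ.IsAddHaarMeasure] (ν : Measure F)
    [ν.IsAddHaarMeasure] {p : ℝ} (hp : 0 < p) :
    ∃ c : ℝ≥0∞, (μ.prod ν).map (fun x => (‖x.1‖ ^ p / ‖x.2‖ ^ p, ‖x.1‖ ^ p + ‖x.2‖ ^ p)) =
      (betaPrimeMeasure (finrank ℝ E / p) (finrank ℝ F / p)).prod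
        (c • powMeasure (finrank ℝ E / p + finrank ℝ F / p)) := by
  have hE : 0 < finrank ℝ E / p := div_pos (Nat.cast_pos.2 finrank_pos) hp
  have hF : 0 < finrank ℝ F / p := div_pos (Nat.cast_pos.2 finrank_pos) hp
  have radii : (μ.prod ν).map (Prod.map (fun x => ‖x‖ ^ p) (fun y => ‖y‖ ^ p)) = _ :=
    (Measure.map_prod_map μ ν (by fun_prop) (by fun_prop)).symm
  rw [map_norm_rpow_addHaar μ hp.ne', map_norm_rpow_addHaar ν hp.ne', Measure.prod_smul_left,
    Measure.prod_smul_right] at radii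
  have quotient_sum := congrArg (Measure.map fun q : ℝ × ℝ => (q.1 / q.2, q.1 + q.2)) radii
  rw [Measure.map_map (by fun_prop) (by fun_prop), Measure.map_smul, Measure.map_smul,
    map_div_add_powMeasure_prod hE hF, smul_smul, smul_smul, ← Measure.prod_smul_right]
    at quotient_sum
  exact ⟨_, quotient_sum⟩

theorem beta_typeII_distribution_invariant_general (μ : Measure E) [μ.IsAddHaarMeasure]
    (ν : Measure F) [ν.IsAddHaarMeasure] {p : ℝ} (hp : 0 < p) {H : ℝ → ℝ≥0∞}
    (hH : Measurable H) :
    ((μ.prod ν).withDensity fun x => H (‖x.1‖ ^ p + ‖x.2‖ ^ p)).map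
        (fun x => ‖x.1‖ ^ p / ‖x.2‖ ^ p) =
      (μ.prod ν).withDensity (fun x => H (‖x.1‖ ^ p + ‖x.2‖ ^ p)) univ •
        betaPrimeMeasure (finrank ℝ E / p) (finrank ℝ F / p) := by
  have hE : 0 < finrank ℝ E / p := div_pos (Nat.cast_pos.2 finrank_pos) hp
  have hF : 0 < finrank ℝ F / p := div_pos (Nat.cast_pos.2 finrank_pos) hp
  have := isProbabilityMeasure_betaPrimeMeasure hE hF
  obtain ⟨c, hc⟩ := exists_map_norm_rpow_div_add_eq_prod μ ν hp
  exact map_withDensity_comp_of_map_prodMk_eq_prod (by fun_prop) (by fun_prop) hH hc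

end Norm

end

theorem beta_typeII_distribution_invariant (n1 n2 : ℕ) (hn1 : 0 < n1) (hn2 : 0 < n2)
    (h : ℝ → ℝ) (hmeas : Measurable h) (hnonneg : ∀ y, 0 ≤ h y)
    (hc : 0 < ∫ w in Set.Ioi (0 : ℝ), h (w ^ 2) * w ^ (n1 + n2 - 1))
    (hcInt : IntegrableOn (fun w => h (w ^ 2) * w ^ (n1 + n2 - 1)) (Set.Ioi 0))
    (C : ℝ) (hC : 0 < C)
    (hprob : IsProbabilityMeasure
      ((volume : Measure (EuclideanSpace ℝ (Fin n1) × EuclideanSpace ℝ (Fin n2))).withDensity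
        (fun x => ENNReal.ofReal (C * h (‖x.1‖ ^ 2 + ‖x.2‖ ^ 2))))) :
    Measure.map (fun x : EuclideanSpace ℝ (Fin n1) × EuclideanSpace ℝ (Fin n2) =>
        ‖x.1‖ ^ 2 / ‖x.2‖ ^ 2)
      ((volume : Measure (EuclideanSpace ℝ (Fin n1) × EuclideanSpace ℝ (Fin n2))).withDensity
        (fun x => ENNReal.ofReal (C * h (‖x.1‖ ^ 2 + ‖x.2‖ ^ 2)))) =
    (volume : Measure ℝ).withDensity (fun f => ENNReal.ofReal
      (Set.indicator (Set.Ioi 0)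
        (fun f => Gamma (((n1 : ℝ) + n2) / 2) / (Gamma ((n1 : ℝ) / 2) * Gamma ((n2 : ℝ) / 2)) *
          (f ^ ((n1 : ℝ) / 2 - 1) * (1 + f) ^ (-(((n1 : ℝ) + n2) / 2)))) f)) := by
  have : Nonempty (Fin n1) := Fin.pos_iff_nonempty.1 hn1
  have : Nonempty (Fin n2) := Fin.pos_iff_nonempty.1 hn2
  have hH : Measurable fun y => ENNReal.ofReal (C * h y) := by fun_prop
  simpa [← Measure.volume_eq_prod, hprob.measure_univ, betaPrimeMeasure, ProbabilityTheory.beta,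
    add_div] using beta_typeII_distribution_invariant_general
      (volume : Measure (EuclideanSpace ℝ (Fin n1))) (volume : Measure (EuclideanSpace ℝ (Fin n2)))
      two_pos hH
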